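/- arXiv:2206.12477 — 4 statements merged into one kernel-verified Lean document; each statement's English description precedes it below -/
import Mathlib

section
/- There is a universal constant C > 0 with the following property. Let S be a finite set, let T ≥ 1 be an integer, let (x_i)_{0≤i≤T} be a sequence of elements of S (not necessarily distinct), let r ≥ 2, and let f : S → (0,∞) satisfy max(f(x_i)/f(x_{i−1}), f(x_{i−1})/f(x_i)) ≤ r for all 1 ≤ i ≤ T. Then (f(x_T) − f(x_0))·log(f(x_T)/f(x_0)) ≤ C·(1 + (T−1)²·log r)·∑_{t=1}^{T} (f(x_t) − f(x_{t−1}))·log(f(x_t)/f(x_{t−1})). -/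
/-!
Write `D(a, b) = (b - a) * log (b / a)`. This quantity is comparable with `(√b - √a) ^ 2`, up to a
logarithmic factor: `(√b - √a) ^ 2 ≤ D(a, b) ≤ (4 + |log (b / a)|) * (√b - √a) ^ 2`
(`sq_sqrt_sub_le` and `sub_mul_log_le`). The square-root form telescopes well: by Cauchy–Schwarz,
`(√(g T) - √(g 0)) ^ 2 ≤ T * ∑ (√(g t) - √(g (t - 1))) ^ 2`. Since the logarithm of the total ratio
is at most `T * log r`, this gives `D(g 0, g T) ≤ (4 + T * log r) * T * ∑ D(g (t - 1), g t)`. For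
`T ≥ 2` the factor is `O((T - 1) ^ 2 * log r)`, because `log r ≥ log 2`; for `T = 1` the claim is
trivial, as both sides are multiples of the same term.
-/

open Finset

noncomputable section

lemma sub_mul_log_comm (a b : ℝ) :
    (b - a) * Real.log (b / a) = (a - b) * Real.log (a / b) := by
  rw [← inv_div a b, Real.log_inv]; ring

lemma log_eq_two_mul_log_sqrt {a b : ℝ} (ha : 0 < a) (hb : 0 < b) :
    Real.log (b / a) = 2 * Real.log (√b / √a) := by
  rw [Real.log_div hb.ne' ha.ne', Real.log_div (Real.sqrt_pos.2 hb).ne' (Real.sqrt_pos.2 ha).ne',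
    Real.log_sqrt hb.le, Real.log_sqrt ha.le]
  ring

lemma sq_sqrt_sub_le {a b : ℝ} (ha : 0 < a) (hb : 0 < b) :
    (√b - √a) ^ 2 ≤ (b - a) * Real.log (b / a) := by
  wlog hab : a ≤ b generalizing a b
  · have := this hb ha (le_of_not_ge hab)
    rw [sub_mul_log_comm]
    linarith [this, sub_sq_comm (√b) (√a)]
  have hs := Real.sqrt_pos.2 hb
  have ht := Real.sqrt_pos.2 ha
  have hts : √a ≤ √b := Real.sqrt_le_sqrt hab
  have h := Real.one_sub_inv_le_log_of_pos (div_pos hs ht)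
  rw [inv_div] at h
  have h2 : √b - √a ≤ √b * Real.log (√b / √a) := by
    have := mul_le_mul_of_nonneg_left h hs.le
    rwa [mul_sub, mul_one, mul_div_cancel₀ _ hs.ne'] at this
  have hy : 0 ≤ Real.log (√b / √a) := Real.log_nonneg ((one_le_div ht).2 hts)
  rw [log_eq_two_mul_log_sqrt ha hb]
  generalize Real.log (√b / √a) = y at *
  have e : b - a = (√b - √a) * (√b + √a) := by
    linarith [Real.sq_sqrt hb.le, Real.sq_sqrt ha.le, sq_sub_sq (√b) (√a),
      mul_comm (√b - √a) (√b + √a)]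
  rw [e, sq, mul_assoc]
  refine mul_le_mul_of_nonneg_left ?_ (sub_nonneg.2 hts)
  nlinarith [mul_nonneg ht.le hy, mul_nonneg hs.le hy]

/-- With `y = log (√b / √a) ≥ 0`, this is the bound `y * coth (y / 2) ≤ y + 2`, which reduces to
`1 + y ≤ exp y`. -/
lemma sub_mul_log_le {a b : ℝ} (ha : 0 < a) (hb : 0 < b) :
    (b - a) * Real.log (b / a) ≤ (4 + |Real.log (b / a)|) * (√b - √a) ^ 2 := by
  wlog hab : a ≤ b generalizing a b
  · have := this hb ha (le_of_not_ge hab)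
    rwa [sub_mul_log_comm, ← inv_div a b, Real.log_inv, abs_neg, sub_sq_comm]
  have hs := Real.sqrt_pos.2 hb
  have ht := Real.sqrt_pos.2 ha
  have hts : √a ≤ √b := Real.sqrt_le_sqrt hab
  have h := Real.log_le_sub_one_of_pos (div_pos hs ht)
  have h2 : √a * (Real.log (√b / √a) + 1) ≤ √b := by
    have := mul_le_mul_of_nonneg_left h ht.le
    rw [mul_sub, mul_one, mul_div_cancel₀ _ ht.ne'] at this
    linarith
  have hy : 0 ≤ Real.log (√b / √a) := Real.log_nonneg ((one_le_div ht).2 hts)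
  rw [log_eq_two_mul_log_sqrt ha hb]
  generalize Real.log (√b / √a) = y at *
  rw [abs_of_nonneg (by positivity)]
  have e : b - a = (√b - √a) * (√b + √a) := by
    linarith [Real.sq_sqrt hb.le, Real.sq_sqrt ha.le, sq_sub_sq (√b) (√a),
      mul_comm (√b - √a) (√b + √a)]
  have k : (√b - √a) * ((√b + √a) * (2 * y)) ≤ (√b - √a) * ((4 + 2 * y) * (√b - √a)) :=
    mul_le_mul_of_nonneg_left (by linarith) (sub_nonneg.2 hts)
  rw [e]
  linarith

lemma sum_Icc_one_eq_sum_range (F : ℕ → ℕ → ℝ) (T : ℕ) :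
    ∑ t ∈ Finset.Icc 1 T, F t (t - 1) = ∑ t ∈ Finset.range T, F (t + 1) t := by
  induction T with
  | zero => simp
  | succ n ih => rw [Finset.sum_Icc_succ_top (by omega), ih, Finset.sum_range_succ]; simp

lemma sub_mul_log_le_sum {g : ℕ → ℝ} (hg : ∀ i, 0 < g i) {T : ℕ} {l : ℝ}
    (hl : ∀ i < T, |Real.log (g (i + 1) / g i)| ≤ l) :
    (g T - g 0) * Real.log (g T / g 0) ≤
      (4 + T * l) * (T * ∑ t ∈ Finset.range T,
        (g (t + 1) - g t) * Real.log (g (t + 1) / g t)) := by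
  have h1 : |Real.log (g T / g 0)| ≤ T * l := by
    have e : Real.log (g T / g 0) = ∑ t ∈ Finset.range T, Real.log (g (t + 1) / g t) := by
      simp_rw [Real.log_div (hg _).ne' (hg _).ne']
      exact (Finset.sum_range_sub (fun t => Real.log (g t)) T).symm
    rw [e]
    refine (Finset.abs_sum_le_sum_abs _ _).trans ?_
    refine (Finset.sum_le_card_nsmul _ _ l fun i hi => hl i (Finset.mem_range.1 hi)).trans ?_
    simp
  have h2 : (√(g T) - √(g 0)) ^ 2 ≤
      T * ∑ t ∈ Finset.range T, (g (t + 1) - g t) * Real.log (g (t + 1) / g t) := by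
    rw [← Finset.sum_range_sub (fun t => √(g t)) T]
    refine sq_sum_le_card_mul_sum_sq.trans ?_
    rw [Finset.card_range]
    gcongr with t
    exact sq_sqrt_sub_le (hg _) (hg _)
  refine (sub_mul_log_le (hg 0) (hg T)).trans ?_
  gcongr
  linarith [abs_nonneg (Real.log (g T / g 0))]

/-- Lemma 3.1 (path decomposition): for a sequence with bounded consecutive ratios,
`(f(x_T) - f(x_0)) log (f(x_T)/f(x_0))` is controlled by the sum of the
consecutive increments. -/
theorem path_decomposition_lemma :
    ∃ C : ℝ, 0 < C ∧
      ∀ (S : Type) [Fintype S] (T : ℕ), 1 ≤ T →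
        ∀ (x : ℕ → S) (r : ℝ), 2 ≤ r →
          ∀ f : S → ℝ, (∀ s, 0 < f s) →
            (∀ i, 1 ≤ i → i ≤ T →
              max (f (x i) / f (x (i - 1))) (f (x (i - 1)) / f (x i)) ≤ r) →
            (f (x T) - f (x 0)) * Real.log (f (x T) / f (x 0)) ≤
              C * (1 + ((T : ℝ) - 1) ^ 2 * Real.log r) *
                ∑ t ∈ Finset.Icc 1 T,
                  (f (x t) - f (x (t - 1))) * Real.log (f (x t) / f (x (t - 1))) := by
  refine ⟨20, by norm_num, ?_⟩
  intro S _ T hT x r hr f hf hx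
  have hlog : 1 / 2 ≤ Real.log r := by
    have := Real.log_le_log two_pos hr
    linarith [Real.log_two_gt_d9]
  rw [sum_Icc_one_eq_sum_range
    (fun i j => (f (x i) - f (x j)) * Real.log (f (x i) / f (x j))) T]
  have hl : ∀ i < T, |Real.log (f (x (i + 1)) / f (x i))| ≤ Real.log r := by
    intro i hi
    have h := max_le_iff.1 (hx (i + 1) (by omega) (by omega))
    rw [Nat.add_sub_cancel] at h
    refine abs_le'.2 ⟨Real.log_le_log (div_pos (hf _) (hf _)) h.1, ?_⟩
    rw [← Real.log_inv, inv_div]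
    exact Real.log_le_log (div_pos (hf _) (hf _)) h.2
  have key := sub_mul_log_le_sum (g := fun i => f (x i)) (fun i => hf _) hl
  have hS : 0 ≤ ∑ t ∈ Finset.range T,
      (f (x (t + 1)) - f (x t)) * Real.log (f (x (t + 1)) / f (x t)) :=
    Finset.sum_nonneg fun t _ => (sq_nonneg _).trans (sq_sqrt_sub_le (hf _) (hf _))
  obtain rfl | hT2 := hT.eq_or_lt
  · simp only [Finset.sum_range_one, zero_add] at hS ⊢
    norm_num
    linarith
  · refine key.trans ?_
    rw [← mul_assoc]
    refine mul_le_mul_of_nonneg_right ?_ hS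
    obtain ⟨m, rfl⟩ : ∃ m, T = m + 1 := ⟨T - 1, by omega⟩
    have hm : (1 : ℝ) ≤ m := by exact_mod_cast (by omega : 1 ≤ m)
    push_cast
    generalize Real.log r = l at *
    rw [add_sub_cancel_right]
    -- With `m = T - 1 ≥ 1` and `1 ≤ 2 * l`: `m + 1 ≤ 2 * m` and `4 * (m + 1) ≤ 16 * m ^ 2 * l`.
    have hmm : (m : ℝ) ≤ m ^ 2 := by nlinarith
    have h1 : (m : ℝ) ≤ 2 * (m ^ 2 * l) := by nlinarith [sq_nonneg (m : ℝ)]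
    have h2 : ((m : ℝ) + 1) ^ 2 * l ≤ 4 * (m ^ 2 * l) := by nlinarith
    nlinarith
end
end

section
/- There is a universal constant c > 0 such that for all n and all 2 ≤ d ≤ n/2, the modified log-Sobolev constant of the switch chain (Ω^B_n(d), π_u, Q_u) is at least c·n·d; that is, every α ≥ 0 such that Ent_{π_u}(f) ≤ α·E_{π_u}(f, log f) holds for all f : Ω^B_n(d) → (0,∞) must satisfy α ≥ c·n·d. -/
/-!
The constant is bounded below by testing the inequality on a function of a single edge. Fix a
potential edge `e`, and let `f = 1/4` on graphs containing `e` and `f = 1` on the others. With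
`p = π(e ∈ G)`:

* column permutations act on `Ω^B_n(d)`, so `p = d / n` (`card_edge`); this gives `0 < p ≤ 1/2`,
  because `Ω^B_n(d)` contains a circulant graph (`nonempty_omegaB`). As `E f = 1 - 3p/4`, the
  inequality `log m ≤ m - 1` yields `Ent f ≥ (3/25) p` (`ent_lower`).
* a switching destroying `e` is determined by the second edge it destroys, so at most `nd`
  neighbours of a graph containing `e` lack it (`card_destroy_le`). Since switchings are
  reversible, `E(f, log f) ≤ p · nd · 2 / (nd (nd - 1)) · (3/4) log 4` (`dir_upper`).

The factor `p` cancels in the quotient, leaving a multiple of `nd - 1`.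
-/

open Finset

noncomputable section

attribute [local instance] Classical.propDecidable

/-- Bipartite graphs on `[n] ⊔ [n]` as 0/1 (Boolean) biadjacency matrices. -/
abbrev BG (n : ℕ) := Fin n → Fin n → Bool

/-- `d`-regularity: all row and column sums equal `d`. -/
def IsBipReg (n d : ℕ) (A : BG n) : Prop :=
  (∀ i, (Finset.univ.filter fun j => A i j = true).card = d) ∧
    (∀ j, (Finset.univ.filter fun i => A i j = true).card = d)

/-- `Ω^B_n(d)`: the set of simple bipartite `d`-regular graphs. -/
abbrev OmegaB (n d : ℕ) := {A : BG n // IsBipReg n d A}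

/-- The result of the simple switching `⟨i₁, i₂, j₁, j₂⟩`: edges `(i₁,j₁)`, `(i₂,j₂)`
are destroyed and replaced by `(i₁,j₂)`, `(i₂,j₁)`. -/
def switchMove {n : ℕ} (A : BG n) (i₁ i₂ j₁ j₂ : Fin n) : BG n :=
  fun i j =>
    if (i = i₁ ∧ j = j₁) ∨ (i = i₂ ∧ j = j₂) then false
    else if (i = i₁ ∧ j = j₂) ∨ (i = i₂ ∧ j = j₁) then true
    else A i j

/-- `B` is obtained from `A` by a valid simple switching. -/
def SwitchAdj {n : ℕ} (A B : BG n) : Prop :=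
  ∃ i₁ i₂ j₁ j₂ : Fin n, i₁ ≠ i₂ ∧ j₁ ≠ j₂ ∧
    A i₁ j₁ = true ∧ A i₂ j₂ = true ∧ A i₁ j₂ = false ∧ A i₂ j₁ = false ∧
    B = switchMove A i₁ i₂ j₁ j₂

/-- Number of graphs reachable from `G` by one simple switching. -/
def numNeighbors (n d : ℕ) (G : OmegaB n d) : ℕ :=
  (Finset.univ.filter fun G' : OmegaB n d => SwitchAdj G.1 G'.1).card

/-- The switch chain generator `Q_u`. -/
def Qu (n d : ℕ) (G₁ G₂ : OmegaB n d) : ℝ :=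
  if G₁ = G₂ then -(numNeighbors n d G₁ : ℝ) * (2 / ((n * d : ℝ) * ((n * d : ℝ) - 1)))
  else if SwitchAdj G₁.1 G₂.1 then 2 / ((n * d : ℝ) * ((n * d : ℝ) - 1))
  else 0

/-- The uniform measure `π_u` on `Ω^B_n(d)`. -/
def piU (n d : ℕ) : OmegaB n d → ℝ := fun _ => (Fintype.card (OmegaB n d) : ℝ)⁻¹

/-- Entropy `Ent_π(f) = E_π[f (log f - log E_π f)]`. -/
def entPi {Ω : Type*} [Fintype Ω] (π f : Ω → ℝ) : ℝ :=
  ∑ ω, π ω * f ω * (Real.log (f ω) - Real.log (∑ ω', π ω' * f ω'))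

/-- Dirichlet form `E_π(log f, f)`. -/
def dirForm {Ω : Type*} [Fintype Ω] (π : Ω → ℝ) (Q : Ω → Ω → ℝ) (f : Ω → ℝ) : ℝ :=
  (1 / 2) * ∑ ω, ∑ ω', π ω * Q ω ω' * (f ω - f ω') * Real.log (f ω / f ω')

lemma switchMove_swap {n : ℕ} (A : BG n) (i₁ i₂ j₁ j₂ : Fin n) :
    switchMove A i₁ i₂ j₁ j₂ = switchMove A i₂ i₁ j₂ j₁ := by
  funext i j
  simp only [switchMove]
  congr 1
  · exact propext or_comm
  · congr 1
    exact propext or_comm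

lemma SwitchAdj.symm {n : ℕ} {A B : BG n} (h : SwitchAdj A B) : SwitchAdj B A := by
  obtain ⟨i₁, i₂, j₁, j₂, hi, hj, h1, h2, h3, h4, rfl⟩ := h
  refine ⟨i₁, i₂, j₂, j₁, hi, hj.symm, ?_, ?_, ?_, ?_, ?_⟩
  · simp [switchMove, hi, hj.symm]
  · simp [switchMove, hi.symm, hj]
  · simp [switchMove]
  · simp [switchMove]
  · funext i j
    simp only [switchMove]
    split_ifs with a b <;> grind

/-- Column permutations preserve regularity. -/
lemma IsBipReg.permCol {n d : ℕ} {A : BG n} (h : IsBipReg n d A) (σ : Equiv.Perm (Fin n)) :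
    IsBipReg n d (fun i j => A i (σ j)) := by
  refine ⟨fun i => ?_, fun j => h.2 (σ j)⟩
  rw [← h.1 i]
  exact Finset.card_equiv σ (by simp)

/-- The circulant graph `{(i, j) : j - i mod n < d}` is `d`-regular. -/
lemma nonempty_omegaB {n d : ℕ} (hn : 0 < n) (hd : d ≤ n) : Nonempty (OmegaB n d) := by
  have : NeZero n := ⟨hn.ne'⟩
  have key : (Finset.univ.filter fun k : Fin n => k.val < d).card = d := by
    rw [Fin.card_filter_val_lt, min_eq_right hd]
  refine ⟨⟨fun i j => decide ((j - i : Fin n).val < d), fun i => ?_, fun j => ?_⟩⟩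
  · refine Eq.trans ?_ key
    exact Finset.card_equiv (Equiv.subRight i) (by simp)
  · refine Eq.trans ?_ key
    exact Finset.card_equiv (Equiv.subLeft j) (by simp)

/-- The graphs containing the edge `(i₀, j₀)`. -/
def withEdge (n d : ℕ) (i₀ j₀ : Fin n) : Finset (OmegaB n d) :=
  Finset.univ.filter fun G => G.1 i₀ j₀ = true

lemma card_withEdge_eq (n d : ℕ) (i₀ j₀ j : Fin n) :
    (withEdge n d i₀ j).card = (withEdge n d i₀ j₀).card := by
  refine Finset.card_nbij' (fun G => ⟨fun a b => G.1 a (Equiv.swap j₀ j b), G.2.permCol _⟩)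
    (fun G => ⟨fun a b => G.1 a (Equiv.swap j₀ j b), G.2.permCol _⟩) ?_ ?_ ?_ ?_
  · intro G hG
    simpa [withEdge] using hG
  · intro G hG
    simpa [withEdge] using hG
  · intro G _
    ext
    simp
  · intro G _
    ext
    simp

/-- A given edge is present with probability `d / n`: average over the columns. -/
lemma card_edge (n d : ℕ) (i₀ j₀ : Fin n) :
    n * (withEdge n d i₀ j₀).card = Fintype.card (OmegaB n d) * d := by
  have h : ∑ j : Fin n, (withEdge n d i₀ j).card = Fintype.card (OmegaB n d) * d := by
    simp only [withEdge, Finset.card_filter]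
    rw [Finset.sum_comm]
    simp only [← Finset.card_filter]
    rw [Finset.sum_congr rfl (fun G _ => G.2.1 i₀)]
    simp
  rw [← h, Finset.sum_congr rfl (fun j _ => card_withEdge_eq n d i₀ j₀ j)]
  simp

/-- At most `nd` switchings destroy a given edge: one for each choice of the other destroyed
edge. -/
lemma card_destroy_le {n d : ℕ} (i₀ j₀ : Fin n) (G : OmegaB n d) (hG : G.1 i₀ j₀ = true) :
    (Finset.univ.filter fun G' : OmegaB n d =>
      SwitchAdj G.1 G'.1 ∧ G'.1 i₀ j₀ = false).card ≤ n * d := by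
  have hE : (Finset.univ.filter fun e : Fin n × Fin n => G.1 e.1 e.2 = true).card = n * d := by
    rw [Finset.card_filter, Fintype.sum_prod_type]
    simp only [← Finset.card_filter]
    rw [Finset.sum_congr rfl (fun i _ => G.2.1 i)]
    simp
  rw [← hE, ← Finset.card_image_of_injective _ (Subtype.val_injective (p := IsBipReg n d))]
  refine (Finset.card_le_card ?_).trans
    (Finset.card_image_le (f := fun e : Fin n × Fin n => switchMove G.1 i₀ e.1 j₀ e.2))
  intro B hB
  simp only [Finset.mem_image, Finset.mem_filter, Finset.mem_univ, true_and] at hB ⊢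
  obtain ⟨G', ⟨⟨i₁, i₂, j₁, j₂, hi, hj, h1, h2, h3, h4, h⟩, h0⟩, rfl⟩ := hB
  rw [h] at h0
  -- An edge of `G` missing from the switched graph is one of the two destroyed edges.
  have hcase : (i₀ = i₁ ∧ j₀ = j₁) ∨ (i₀ = i₂ ∧ j₀ = j₂) := by
    by_contra hc
    simp only [switchMove, if_neg hc] at h0
    split_ifs at h0
    simp [hG] at h0
  rcases hcase with ⟨rfl, rfl⟩ | ⟨rfl, rfl⟩
  · exact ⟨(i₂, j₂), h2, h.symm⟩
  · exact ⟨(i₁, j₁), h1, by rw [h, switchMove_swap]⟩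

/-- The test function: `1/4` on graphs containing the edge `(i₀, j₀)`, and `1` elsewhere. -/
def testFun (n d : ℕ) (i₀ j₀ : Fin n) (G : OmegaB n d) : ℝ :=
  if G.1 i₀ j₀ = true then 1 / 4 else 1

lemma log_four : Real.log 4 = 2 * Real.log 2 := by
  rw [show (4 : ℝ) = 2 ^ 2 by norm_num, Real.log_pow]
  norm_num

lemma log_quarter : Real.log (1 / 4) = -(2 * Real.log 2) := by
  rw [one_div, Real.log_inv, log_four]

lemma ent_lower (n d : ℕ) (i₀ j₀ : Fin n) (p : ℝ) (hN : 0 < Fintype.card (OmegaB n d))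
    (hp : p = (withEdge n d i₀ j₀).card / (Fintype.card (OmegaB n d) : ℝ))
    (hp2 : p ≤ 1 / 2) : 3 / 25 * p ≤ entPi (piU n d) (testFun n d i₀ j₀) := by
  have hN' : (0 : ℝ) < Fintype.card (OmegaB n d) := by exact_mod_cast hN
  have hp0 : 0 ≤ p := by rw [hp]; positivity
  have hsum : ∀ a b : ℝ, ∑ G : OmegaB n d, piU n d G * (if G.1 i₀ j₀ = true then a else b)
      = p * a + (1 - p) * b := by
    intro a b
    have h1 : ∀ G : OmegaB n d, piU n d G * (if G.1 i₀ j₀ = true then a else b)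
        = (Fintype.card (OmegaB n d) : ℝ)⁻¹ * (b + (a - b) * if G.1 i₀ j₀ = true then 1 else 0) := by
      intro G
      simp only [piU]
      split_ifs <;> ring
    rw [Finset.sum_congr rfl (fun G _ => h1 G), ← Finset.mul_sum, Finset.sum_add_distrib,
      ← Finset.mul_sum, Finset.sum_boole, hp]
    simp only [withEdge, Finset.sum_const, Finset.card_univ, nsmul_eq_mul]
    field_simp
    ring
  have hmean : ∑ G, piU n d G * testFun n d i₀ j₀ G = 1 - 3 / 4 * p := by
    simp only [testFun]
    rw [hsum]
    ring
  have hent : entPi (piU n d) (testFun n d i₀ j₀)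
      = p * (1 / 4 * (Real.log (1 / 4) - Real.log (1 - 3 / 4 * p)))
        + (1 - p) * (1 * (Real.log 1 - Real.log (1 - 3 / 4 * p))) := by
    rw [entPi, hmean, ← hsum]
    refine Finset.sum_congr rfl fun G _ => ?_
    simp only [testFun]
    split_ifs <;> ring
  have hm : 0 < 1 - 3 / 4 * p := by linarith
  have hlog := Real.log_le_sub_one_of_pos hm
  have hl2 := Real.log_two_lt_d9
  rw [hent, log_quarter, Real.log_one]
  have h1 := mul_le_mul_of_nonneg_left hlog hm.le
  have h2 := mul_le_mul_of_nonneg_left hl2.le hp0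
  have h3 := mul_le_mul_of_nonneg_left hp2 hp0
  nlinarith

lemma dir_upper (n d : ℕ) (i₀ j₀ : Fin n) (p : ℝ) (hnd : 1 < (n * d : ℝ))
    (hp : p = (withEdge n d i₀ j₀).card / (Fintype.card (OmegaB n d) : ℝ)) :
    dirForm (piU n d) (Qu n d) (testFun n d i₀ j₀)
      ≤ p * (2 / ((n * d : ℝ) - 1)) * (3 / 2 * Real.log 2) := by
  set q : ℝ := 2 / ((n * d : ℝ) * ((n * d : ℝ) - 1)) with hq
  set N : ℝ := ((Fintype.card (OmegaB n d) : ℕ) : ℝ) with hNdef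
  have hl : 0 < Real.log 2 := Real.log_pos (by norm_num)
  have hnd1 : 0 < (n * d : ℝ) - 1 := by linarith
  have hnd0 : 0 < (n * d : ℝ) := by linarith
  have hq0 : 0 < q := by positivity
  have hN0 : 0 ≤ N := by positivity
  set K : ℝ := N⁻¹ * q * (3 / 2 * Real.log 2) with hK
  have hK0 : 0 ≤ K := by positivity
  -- Indicator of the ordered pairs whose switching destroys the edge.
  let I : OmegaB n d → OmegaB n d → ℝ := fun G G' =>
    if G.1 i₀ j₀ = true ∧ SwitchAdj G.1 G'.1 ∧ G'.1 i₀ j₀ = false then 1 else 0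
  have hI0 : ∀ G G', 0 ≤ I G G' := by
    intro G G'
    simp only [I]
    split_ifs <;> norm_num
  have hterm : ∀ G G' : OmegaB n d,
      piU n d G * Qu n d G G' * (testFun n d i₀ j₀ G - testFun n d i₀ j₀ G')
        * Real.log (testFun n d i₀ j₀ G / testFun n d i₀ j₀ G') ≤ K * (I G G' + I G' G) := by
    intro G G'
    have hR : 0 ≤ K * (I G G' + I G' G) := mul_nonneg hK0 (add_nonneg (hI0 _ _) (hI0 _ _))
    by_cases hGG : G = G'
    · subst hGG
      simpa using hR
    by_cases hadj : SwitchAdj G.1 G'.1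
    · have hadj' := hadj.symm
      have hQ : Qu n d G G' = q := by simp [Qu, hGG, hadj, hq]
      rw [hQ]
      simp only [piU, testFun, I, ← hNdef]
      rcases h : G.1 i₀ j₀ with _ | _ <;> rcases h' : G'.1 i₀ j₀ with _ | _
      · simp
      · have h4 : (1 : ℝ) / (1 / 4) = 4 := by norm_num
        simp only [hadj', Bool.false_eq_true, if_true, if_false, and_self, false_and, h4,
          log_four, hK]
        apply le_of_eq
        ring
      · simp only [hadj, Bool.false_eq_true, if_true, if_false, and_self, false_and, div_one,
          log_quarter, hK]
        apply le_of_eq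
        ring
      · simp
    · have hQ : Qu n d G G' = 0 := by simp [Qu, hGG, hadj]
      rw [hQ]
      simpa using hR
  have hI : ∑ G, ∑ G', I G G' ≤ (withEdge n d i₀ j₀).card * (n * d : ℝ) := by
    have hrow : ∀ G : OmegaB n d,
        ∑ G', I G G' ≤ (if G.1 i₀ j₀ = true then 1 else 0) * (n * d : ℝ) := by
      intro G
      by_cases hG : G.1 i₀ j₀ = true
      · simp only [I, hG, true_and, if_true, one_mul, Finset.sum_boole]
        exact_mod_cast card_destroy_le i₀ j₀ G hG
      · simp [I, hG]
    refine (Finset.sum_le_sum fun G _ => hrow G).trans ?_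
    rw [← Finset.sum_mul, Finset.sum_boole, withEdge]
  calc dirForm (piU n d) (Qu n d) (testFun n d i₀ j₀)
      ≤ 1 / 2 * ∑ G, ∑ G', K * (I G G' + I G' G) := by
        unfold dirForm
        refine mul_le_mul_of_nonneg_left ?_ (by norm_num)
        exact Finset.sum_le_sum fun G _ => Finset.sum_le_sum fun G' _ => hterm G G'
    _ = K * ∑ G, ∑ G', I G G' := by
        simp only [← Finset.mul_sum, Finset.sum_add_distrib]
        rw [Finset.sum_comm (f := fun G G' => I G' G)]
        ring
    _ ≤ K * ((withEdge n d i₀ j₀).card * (n * d : ℝ)) := mul_le_mul_of_nonneg_left hI hK0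
    _ = p * (2 / ((n * d : ℝ) - 1)) * (3 / 2 * Real.log 2) := by
        rw [hK, hp, hq]
        clear_value N
        generalize (n * d : ℝ) = x at hnd0 hnd1 ⊢
        field_simp


/-- Proposition 4.1: the MLSI constant of the switch chain is at least `c · n · d`. -/
theorem switch_chain_mlsi_lower_bound :
    ∃ c : ℝ, 0 < c ∧
      ∀ n d : ℕ, 2 ≤ d → 2 * d ≤ n →
        ∀ α : ℝ, 0 ≤ α →
          (∀ f : OmegaB n d → ℝ, (∀ G, 0 < f G) →
            entPi (piU n d) f ≤ α * dirForm (piU n d) (Qu n d) f) →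
          c * n * d ≤ α := by
  refine ⟨1 / 50, by norm_num, fun n d hd hn α hα H => ?_⟩
  have hn0 : 0 < n := by omega
  let z : Fin n := ⟨0, hn0⟩
  have hN : 0 < Fintype.card (OmegaB n d) :=
    Fintype.card_pos_iff.mpr (nonempty_omegaB hn0 (by omega))
  have hN' : (0 : ℝ) < Fintype.card (OmegaB n d) := by exact_mod_cast hN
  have hcard := card_edge n d z z
  have hM : 0 < (withEdge n d z z).card := by
    have : 0 < n * (withEdge n d z z).card := by rw [hcard]; positivity
    exact Nat.pos_of_mul_pos_left this
  have hM2 : 2 * (withEdge n d z z).card ≤ Fintype.card (OmegaB n d) := by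
    refine Nat.le_of_mul_le_mul_left ?_ hn0
    nlinarith
  obtain ⟨p, hp⟩ : ∃ p : ℝ, p = (withEdge n d z z).card / (Fintype.card (OmegaB n d) : ℝ) :=
    ⟨_, rfl⟩
  have hp0 : 0 < p := by
    rw [hp]
    exact div_pos (by exact_mod_cast hM) hN'
  have hp2 : p ≤ 1 / 2 := by
    rw [hp, div_le_iff₀ hN']
    have : (2 : ℝ) * (withEdge n d z z).card ≤ Fintype.card (OmegaB n d) := by exact_mod_cast hM2
    linarith
  have hnd : (8 : ℝ) ≤ n * d := by
    have : 8 ≤ n * d := by nlinarith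
    exact_mod_cast this
  have h1 := ent_lower n d z z p hN hp hp2
  have h2 := dir_upper n d z z p (by linarith) hp
  have h3 := H (testFun n d z z) (fun G => by unfold testFun; split_ifs <;> norm_num)
  have h4 := h1.trans (h3.trans (mul_le_mul_of_nonneg_left h2 hα))
  have hpos : (0 : ℝ) < n * d - 1 := by linarith
  have h5 : 3 / 25 * (n * d - 1 : ℝ) ≤ α * 3 * Real.log 2 := by
    refine le_of_mul_le_mul_left ?_ hp0
    have h6 := mul_le_mul_of_nonneg_right h4 hpos.le
    have h7 : α * (p * (2 / ((n * d : ℝ) - 1)) * (3 / 2 * Real.log 2)) * ((n * d : ℝ) - 1)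
        = p * (α * 3 * Real.log 2) := by
      field_simp
    linarith
  have h8 := mul_le_mul_of_nonneg_left Real.log_two_lt_d9.le hα
  linarith
end
end

section
/- There is a universal constant c > 0 such that for all n and all 2 ≤ d ≤ n/2, the switch chain on the configuration model (Ω^{BC}_n(d), π_BC, Q_c) satisfies the Modified log-Sobolev Inequality with constant c·n·d; that is, for every f : Ω^{BC}_n(d) → (0,∞), Ent_{π_BC}(f) ≤ c·n·d·E_{π_BC}(log f, f). -/
/-!
The constant `c = 1` works. Write `N = n * d` and `φ(a, b) = (a - b) (log a - log b)`.

**Lifting to permutations.** A permutation `σ` of the `N` half-edges `Fin n × Fin d`, read as a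
perfect matching between left and right half-edges, gives the multigraph `configMap σ`. A
double count (`card_configMap_eq`) shows that the uniform measure on permutations is mapped to
`piBC`, and the transpositions `σ ↦ σ * swap x z` are mapped to the switchings with the right
multiplicities (`sum_transpositions`). Hence entropy and Dirichlet form of `f` are those of
`f ∘ configMap` for the random transposition walk.

**Random transpositions.** It remains to show (`perm_mlsi`), for positive `f` on the symmetric
group of a set with `N` elements under the uniform measure,
`Ent(f) ≤ (1 / (2 * N)) ∑_{x, z} E φ(f(σ), f(σ * swap x z))`.
The proof is by induction on `N`. For each `i`, the chain rule splits `Ent(f)` into the mean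
conditional entropy given `σ i`, to which the induction hypothesis applies, and the entropy of the
marginal of `σ i`. The latter is at most its covariance with its logarithm (`ent_le_phi`), and as
`φ` is subadditive (`phi_sum_le`), coupling `{σ i = y}` and `{σ i = z}` by `swap y z` bounds it by
`(1 / (2 * N)) ∑_w E φ(f(σ), f(σ * swap i w))` (`marginal_le`). Averaging
over `i`, the constant `1` reproduces itself since a pair avoids all but two choices of `i` and
`(N - 2) / (N - 1) + 1 / N ≤ 1`.
-/

open Finset

noncomputable section

attribute [local instance] Classical.propDecidable

/-- Bipartite multigraphs on `[n] ⊔ [n]` as matrices of multiplicities. -/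
abbrev MG (n : ℕ) := Fin n → Fin n → ℕ

/-- `d`-regularity for multigraphs: all row and column sums equal `d`. -/
def IsMultiReg (n d : ℕ) (G : MG n) : Prop :=
  (∀ i, ∑ j, G i j = d) ∧ (∀ j, ∑ i, G i j = d)

/-- `Ω^{BC}_n(d)`: the set of bipartite `d`-regular multigraphs. -/
abbrev OmegaBC (n d : ℕ) := {G : MG n // IsMultiReg n d G}

theorem entry_le {n d : ℕ} (G : OmegaBC n d) (i j : Fin n) : G.1 i j ≤ d := by
  calc G.1 i j ≤ ∑ j', G.1 i j' :=
        Finset.single_le_sum (fun _ _ => Nat.zero_le _) (Finset.mem_univ j)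
    _ = d := G.2.1 i

instance (n d : ℕ) : Fintype (OmegaBC n d) :=
  Fintype.ofInjective
    (fun G : OmegaBC n d =>
      (fun i j => (⟨min (G.1 i j) d, Nat.lt_succ_of_le (min_le_right _ _)⟩ : Fin (d + 1)) :
        Fin n → Fin n → Fin (d + 1)))
    (by
      intro G H h
      apply Subtype.ext; funext i j
      have h1 := congrFun (congrFun h i) j
      have hG := entry_le G i j
      have hH := entry_le H i j
      simpa [Fin.ext_iff, Nat.min_eq_left hG, Nat.min_eq_left hH] using h1)

/-- The configuration-model measure `π_BC`. -/
def piBC (n d : ℕ) (G : OmegaBC n d) : ℝ :=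
  ((d.factorial : ℝ)) ^ (2 * n) /
    (((n * d).factorial : ℝ) * ∏ i, ∏ j, ((G.1 i j).factorial : ℝ))

/-- Result of the switching `⟨i, i', j, j'⟩` on a multigraph: multiplicities of
`(i,j)` and `(i',j')` decrease by one, those of `(i,j')` and `(i',j)` increase by one. -/
def switchResMG {n : ℕ} (G : MG n) (i i' j j' : Fin n) : MG n :=
  fun a b =>
    if (a = i ∧ b = j) ∨ (a = i' ∧ b = j') then G a b - 1
    else if (a = i ∧ b = j') ∨ (a = i' ∧ b = j) then G a b + 1
    else G a b

/-- Off-diagonal entries of the switch chain generator `Q_c` on the configuration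
model: if `G₂` is obtained from `G₁` by the switching `⟨i,i',j,j'⟩`, the rate is
`2 mult(i,j) mult(i',j') / (nd(nd-1))`; the factor `1/2` accounts for the double
counting of the switching `⟨i',i,j',j⟩`. -/
def QcOff (n d : ℕ) (G₁ G₂ : OmegaBC n d) : ℝ :=
  (1 / 2) * ∑ i : Fin n, ∑ i' : Fin n, ∑ j : Fin n, ∑ j' : Fin n,
    if i ≠ i' ∧ j ≠ j' ∧ 1 ≤ G₁.1 i j ∧ 1 ≤ G₁.1 i' j' ∧ G₂.1 = switchResMG G₁.1 i i' j j'
    then ((G₁.1 i j : ℝ) * (G₁.1 i' j' : ℝ)) * (2 / ((n * d : ℝ) * ((n * d : ℝ) - 1)))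
    else 0

/-- The switch chain generator `Q_c` on the configuration model. -/
def Qc (n d : ℕ) (G₁ G₂ : OmegaBC n d) : ℝ :=
  if G₁ = G₂ then -∑ G' ∈ Finset.univ.filter (fun G' => G' ≠ G₁), QcOff n d G₁ G'
  else QcOff n d G₁ G₂

/-! ### Two convexity inequalities -/

/-- The integrand `(a - b) (log a - log b)` of the Dirichlet form `E(log f, f)`. -/
def phi (a b : ℝ) : ℝ := (a - b) * Real.log (a / b)

theorem phi_self (a : ℝ) : phi a a = 0 := by simp [phi]

theorem phi_symm (a b : ℝ) : phi a b = phi b a := by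
  unfold phi
  rw [← inv_div b a, Real.log_inv]
  ring

theorem phi_nonneg {a b : ℝ} (ha : 0 < a) (hb : 0 < b) : 0 ≤ phi a b := by
  unfold phi
  rcases le_total b a with h | h
  · exact mul_nonneg (by linarith) (Real.log_nonneg ((one_le_div hb).2 h))
  · exact mul_nonneg_of_nonpos_of_nonpos (by linarith)
      (Real.log_nonpos (by positivity) ((div_le_one hb).2 h))

/-- The log-sum inequality. -/
theorem log_sum_le {ι : Type*} (s : Finset ι) (a b : ι → ℝ) (hs : s.Nonempty)
    (ha : ∀ i ∈ s, 0 < a i) (hb : ∀ i ∈ s, 0 < b i) :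
    (∑ i ∈ s, a i) * Real.log ((∑ i ∈ s, a i) / ∑ i ∈ s, b i) ≤
      ∑ i ∈ s, a i * Real.log (a i / b i) := by
  have hA : 0 < ∑ i ∈ s, a i := Finset.sum_pos ha hs
  have hB : 0 < ∑ i ∈ s, b i := Finset.sum_pos hb hs
  set A := ∑ i ∈ s, a i with hAdef
  set B := ∑ i ∈ s, b i with hBdef
  -- `log t ≥ 1 - 1 / t` at `t = (a / b) / (A / B)`; the linear terms cancel after summation
  have key : ∀ i ∈ s, a i * Real.log (A / B) + (a i - b i * (A / B)) ≤
      a i * Real.log (a i / b i) := by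
    intro i hi
    have h1 := ha i hi
    have h2 := hb i hi
    have h3 := Real.one_sub_inv_le_log_of_pos (x := (a i / b i) / (A / B)) (by positivity)
    rw [Real.log_div (by positivity) (by positivity)] at h3
    have h4 := mul_le_mul_of_nonneg_left h3 h1.le
    have h5 : a i * (1 - ((a i / b i) / (A / B))⁻¹) = a i - b i * (A / B) := by
      field_simp
    linarith
  have h := Finset.sum_le_sum key
  rw [Finset.sum_add_distrib, Finset.sum_sub_distrib, ← Finset.sum_mul, ← Finset.sum_mul,
    ← hAdef, ← hBdef, mul_div_cancel₀ _ hB.ne'] at h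
  linarith

/-- `phi` is convex and homogeneous of degree one, hence subadditive. -/
theorem phi_sum_le {ι : Type*} (s : Finset ι) (a b : ι → ℝ)
    (ha : ∀ i ∈ s, 0 < a i) (hb : ∀ i ∈ s, 0 < b i) :
    phi (∑ i ∈ s, a i) (∑ i ∈ s, b i) ≤ ∑ i ∈ s, phi (a i) (b i) := by
  rcases s.eq_empty_or_nonempty with rfl | hs
  · simp [phi]
  have e : ∀ x y : ℝ, phi x y = x * Real.log (x / y) + y * Real.log (y / x) := by
    intro x y
    unfold phi
    rw [← inv_div x y, Real.log_inv]
    ring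
  simp only [e, Finset.sum_add_distrib]
  exact add_le_add (log_sum_le s a b hs ha hb) (log_sum_le s b a hs hb ha)

/-- The modified log-Sobolev inequality `Ent(g) ≤ Cov(g, log g)` on a finite set with the
uniform measure, i.e. Jensen's inequality for `log`, without normalising factors. -/
theorem ent_le_phi {ι : Type*} (s : Finset ι) (g : ι → ℝ) (hs : s.Nonempty)
    (hg : ∀ i ∈ s, 0 < g i) :
    ∑ i ∈ s, g i * Real.log (g i) - (∑ i ∈ s, g i) * Real.log ((∑ i ∈ s, g i) / #s) ≤
      (1 / (2 * #s)) * ∑ i ∈ s, ∑ j ∈ s, phi (g i) (g j) := by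
  have hF : 0 < ∑ i ∈ s, g i := Finset.sum_pos hg hs
  have hM : (0 : ℝ) < #s := by exact_mod_cast hs.card_pos
  set F := ∑ i ∈ s, g i with hFdef
  set M : ℝ := (#s : ℝ) with hMdef
  have jen : ∑ i ∈ s, Real.log (g i) ≤ M * Real.log (F / M) := by
    have key : ∀ i ∈ s, Real.log (g i) ≤ Real.log (F / M) + (g i * (M / F) - 1) := by
      intro i hi
      have h1 := hg i hi
      have h3 := Real.log_le_sub_one_of_pos (x := g i * (M / F)) (by positivity)
      rw [← inv_div F M, ← div_eq_mul_inv, Real.log_div (by positivity) (by positivity)] at h3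
      rw [← inv_div F M, ← div_eq_mul_inv]
      linarith
    have h := Finset.sum_le_sum key
    rw [Finset.sum_add_distrib, Finset.sum_sub_distrib, ← Finset.sum_mul, ← hFdef,
      mul_div_cancel₀ _ hF.ne'] at h
    simp only [Finset.sum_const, nsmul_eq_mul, mul_one, ← hMdef] at h
    linarith
  have e : ∑ i ∈ s, ∑ j ∈ s, phi (g i) (g j) =
      2 * M * ∑ i ∈ s, g i * Real.log (g i) - 2 * F * ∑ i ∈ s, Real.log (g i) := by
    have h1 : ∀ i ∈ s, ∑ j ∈ s, phi (g i) (g j) =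
        M * (g i * Real.log (g i)) - g i * (∑ j ∈ s, Real.log (g j)) - F * Real.log (g i)
          + ∑ j ∈ s, g j * Real.log (g j) := by
      intro i hi
      have h2 : ∀ j ∈ s, phi (g i) (g j) = g i * Real.log (g i) - g i * Real.log (g j)
          - g j * Real.log (g i) + g j * Real.log (g j) := by
        intro j hj
        rw [phi, Real.log_div (hg i hi).ne' (hg j hj).ne']
        ring
      rw [Finset.sum_congr rfl h2, Finset.sum_add_distrib, Finset.sum_sub_distrib,
        Finset.sum_sub_distrib, ← Finset.mul_sum, ← Finset.mul_sum, ← Finset.sum_mul,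
        Finset.sum_const, nsmul_eq_mul, ← hMdef, ← hFdef]
      ring
    rw [Finset.sum_congr rfl h1, Finset.sum_add_distrib, Finset.sum_sub_distrib,
      Finset.sum_sub_distrib, ← Finset.mul_sum, ← Finset.sum_mul, ← Finset.mul_sum,
      Finset.sum_const, nsmul_eq_mul]
    ring
  rw [e]
  have h := mul_le_mul_of_nonneg_left jen hF.le
  have e2 : 1 / (2 * M) * (2 * M * ∑ i ∈ s, g i * Real.log (g i)
      - 2 * F * ∑ i ∈ s, Real.log (g i)) =
      ∑ i ∈ s, g i * Real.log (g i) - (F * ∑ i ∈ s, Real.log (g i)) / M := by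
    field_simp
  rw [e2]
  have h3 : (F * ∑ i ∈ s, Real.log (g i)) / M ≤ F * Real.log (F / M) := by
    rw [div_le_iff₀ hM]
    linarith
  linarith

/-! ### Random transpositions -/

section Perms

variable {α : Type*} [Fintype α] [DecidableEq α]

/-- The permutations of `α` that fix every point outside `S`. -/
def permsOn (S : Finset α) : Finset (Equiv.Perm α) :=
  Finset.univ.filter fun σ => ∀ x, x ∉ S → σ x = x

theorem mem_permsOn {S : Finset α} {σ : Equiv.Perm α} :
    σ ∈ permsOn S ↔ ∀ x, x ∉ S → σ x = x := by simp [permsOn]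

theorem permsOn_maps {S : Finset α} {σ : Equiv.Perm α} (h : σ ∈ permsOn S) {x : α} :
    σ x ∈ S ↔ x ∈ S := by
  rw [mem_permsOn] at h
  constructor
  · intro hx
    by_contra hn
    exact hn (h x hn ▸ hx)
  · intro hx
    by_contra hn
    have := σ.injective (h _ hn)
    exact hn (this.symm ▸ hx)

theorem swap_mem_permsOn {S : Finset α} {y z : α} (hy : y ∈ S) (hz : z ∈ S) :
    Equiv.swap y z ∈ permsOn S := by
  rw [mem_permsOn]
  intro x hx
  exact Equiv.swap_apply_of_ne_of_ne (fun h => hx (h ▸ hy)) (fun h => hx (h ▸ hz))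

theorem mul_mem_permsOn {S : Finset α} {σ τ : Equiv.Perm α} (hσ : σ ∈ permsOn S)
    (hτ : τ ∈ permsOn S) : σ * τ ∈ permsOn S := by
  rw [mem_permsOn] at *
  intro x hx
  rw [Equiv.Perm.mul_apply, hτ x hx, hσ x hx]

/-- The permutations in `permsOn S` with `ρ i = y` form the coset
`swap i y * permsOn (S.erase i)`. -/
theorem sum_fiber_erase {S : Finset α} {i y : α} (hi : i ∈ S) (hy : y ∈ S)
    (F : Equiv.Perm α → ℝ) :
    ∑ ρ ∈ (permsOn S).filter (fun ρ => ρ i = y), F ρ =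
      ∑ τ ∈ permsOn (S.erase i), F (Equiv.swap i y * τ) := by
  symm
  refine Finset.sum_nbij' (fun τ => Equiv.swap i y * τ) (fun ρ => Equiv.swap i y * ρ)
    ?_ ?_ ?_ ?_ ?_
  · intro τ hτ
    have hτi : τ i = i := mem_permsOn.1 hτ i (by simp)
    rw [Finset.mem_filter]
    refine ⟨mul_mem_permsOn (swap_mem_permsOn hi hy) (mem_permsOn.2 fun x hx =>
      mem_permsOn.1 hτ x (fun h => hx (Finset.mem_of_mem_erase h))), ?_⟩
    simp [hτi]
  · intro ρ hρ
    rw [Finset.mem_filter] at hρ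
    rw [mem_permsOn]
    intro x hx
    by_cases hxi : x = i
    · subst hxi
      simp [hρ.2]
    · have hxS : x ∉ S := fun h => hx (Finset.mem_erase.2 ⟨hxi, h⟩)
      exact mem_permsOn.1 (mul_mem_permsOn (swap_mem_permsOn hi hy) hρ.1) x hxS
  · intro τ _
    simp
  · intro τ _
    simp
  · intro τ _
    rfl

theorem sum_fiber {S : Finset α} {i : α} (hi : i ∈ S) (F : Equiv.Perm α → ℝ) :
    ∑ ρ ∈ permsOn S, F ρ = ∑ y ∈ S, ∑ ρ ∈ (permsOn S).filter (fun ρ => ρ i = y), F ρ :=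
  (Finset.sum_fiberwise_of_maps_to (fun _ hρ => (permsOn_maps hρ).2 hi) F).symm

/-- Multiplying by `swap y z` on the left couples the uniform laws on `{ρ i = y}` and
`{ρ i = z}`. -/
theorem sum_fiber_swap {S : Finset α} {i y z : α} (hy : y ∈ S) (hz : z ∈ S)
    (F : Equiv.Perm α → ℝ) :
    ∑ ρ ∈ (permsOn S).filter (fun ρ => ρ i = z), F ρ =
      ∑ ρ ∈ (permsOn S).filter (fun ρ => ρ i = y), F (Equiv.swap y z * ρ) := by
  refine Finset.sum_nbij' (fun τ => Equiv.swap y z * τ) (fun ρ => Equiv.swap y z * ρ)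
    ?_ ?_ ?_ ?_ ?_
  · intro τ hτ
    rw [Finset.mem_filter] at *
    exact ⟨mul_mem_permsOn (swap_mem_permsOn hy hz) hτ.1, by simp [hτ.2]⟩
  · intro τ hτ
    rw [Finset.mem_filter] at *
    exact ⟨mul_mem_permsOn (swap_mem_permsOn hy hz) hτ.1, by simp [hτ.2]⟩
  · intro τ _
    simp
  · intro τ _
    simp
  · intro τ _
    simp

/-- The contribution of the marginals of `ρ i` to the entropy is controlled by the
transpositions that move `i`. -/
theorem marginal_le {S : Finset α} {i : α} (hi : i ∈ S) (f : Equiv.Perm α → ℝ)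
    (hf : ∀ σ, 0 < f σ) :
    ∑ y ∈ S, ∑ z ∈ S, phi (∑ ρ ∈ (permsOn S).filter (fun ρ => ρ i = y), f ρ)
        (∑ ρ ∈ (permsOn S).filter (fun ρ => ρ i = z), f ρ) ≤
      ∑ ρ ∈ permsOn S, ∑ w ∈ S, phi (f ρ) (f (ρ * Equiv.swap i w)) := by
  have h1 : ∀ y ∈ S, ∑ z ∈ S, phi (∑ ρ ∈ (permsOn S).filter (fun ρ => ρ i = y), f ρ)
        (∑ ρ ∈ (permsOn S).filter (fun ρ => ρ i = z), f ρ) ≤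
      ∑ ρ ∈ (permsOn S).filter (fun ρ => ρ i = y), ∑ w ∈ S,
        phi (f ρ) (f (ρ * Equiv.swap i w)) := by
    intro y hy
    have h2 : ∀ z ∈ S, phi (∑ ρ ∈ (permsOn S).filter (fun ρ => ρ i = y), f ρ)
        (∑ ρ ∈ (permsOn S).filter (fun ρ => ρ i = z), f ρ) ≤
        ∑ ρ ∈ (permsOn S).filter (fun ρ => ρ i = y), phi (f ρ) (f (Equiv.swap y z * ρ)) := by
      intro z hz
      rw [sum_fiber_swap hy hz f]
      exact phi_sum_le _ _ _ (fun _ _ => hf _) (fun _ _ => hf _)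
    refine (Finset.sum_le_sum h2).trans_eq ?_
    rw [Finset.sum_comm]
    refine Finset.sum_congr rfl fun ρ hρ => ?_
    rw [Finset.mem_filter] at hρ
    -- `swap (ρ i) (ρ w) * ρ = ρ * swap i w`
    symm
    refine Finset.sum_nbij' (fun w => ρ w) (fun z => ρ⁻¹ z) ?_ ?_ ?_ ?_ ?_
    · intro w hw
      exact (permsOn_maps hρ.1).2 hw
    · intro z hz
      refine (permsOn_maps hρ.1).1 ?_
      simpa using hz
    · intro w _
      simp
    · intro z _
      simp
    · intro w _
      rw [← hρ.2, Equiv.swap_apply_apply]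
      simp [mul_assoc]
  rw [sum_fiber hi]
  exact Finset.sum_le_sum h1

/-- A pair `x ≠ z` in `S` survives the removal of `i` for all but two choices of `i ∈ S`. -/
theorem sum_erase_pairs {α : Type*} [DecidableEq α] (S : Finset α) (h : α → α → ℝ) (h0 : ∀ x, h x x = 0) :
    ∑ i ∈ S, ∑ x ∈ S.erase i, ∑ z ∈ S.erase i, h x z =
      ((#S : ℝ) - 2) * ∑ x ∈ S, ∑ z ∈ S, h x z := by
  have e : ∀ i ∈ S, ∑ x ∈ S.erase i, ∑ z ∈ S.erase i, h x z =
      ∑ x ∈ S, ∑ z ∈ S, h x z - ∑ z ∈ S, h i z - ∑ x ∈ S, h x i := by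
    intro i hi
    have e1 : ∀ x, ∑ z ∈ S.erase i, h x z = ∑ z ∈ S, h x z - h x i := by
      intro x
      rw [← Finset.add_sum_erase S _ hi]
      ring
    simp only [e1, Finset.sum_sub_distrib]
    rw [← Finset.add_sum_erase S (fun x => ∑ z ∈ S, h x z) hi,
      ← Finset.add_sum_erase S (fun x => h x i) hi, h0]
    ring
  rw [Finset.sum_congr rfl e, Finset.sum_sub_distrib, Finset.sum_sub_distrib, Finset.sum_const,
    nsmul_eq_mul, Finset.sum_comm (f := fun i x => h x i)]
  ring

/-- Modified log-Sobolev inequality for random transpositions on `permsOn S`, with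
unnormalised sums; `(#S)!` is the cardinality of `permsOn S`. -/
theorem perm_mlsi (S : Finset α) (f : Equiv.Perm α → ℝ) (hf : ∀ σ, 0 < f σ) :
    ∑ σ ∈ permsOn S, f σ * Real.log (f σ) -
        (∑ σ ∈ permsOn S, f σ) * Real.log ((∑ σ ∈ permsOn S, f σ) / ((#S).factorial : ℝ)) ≤
      (1 / (2 * #S)) *
        ∑ σ ∈ permsOn S, ∑ x ∈ S, ∑ z ∈ S, phi (f σ) (f (σ * Equiv.swap x z)) := by
  induction hm : #S generalizing S f with
  | zero =>
    have hS : S = ∅ := Finset.card_eq_zero.1 hm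
    subst hS
    have hP : permsOn (∅ : Finset α) = {1} := by
      ext σ
      simp [mem_permsOn, Equiv.ext_iff]
    simp [hP]
  | succ m ih =>
    have hSne : S.Nonempty := Finset.card_pos.1 (by omega)
    set F := ∑ σ ∈ permsOn S, f σ with hF
    set D := ∑ σ ∈ permsOn S, ∑ x ∈ S, ∑ z ∈ S, phi (f σ) (f (σ * Equiv.swap x z)) with hD
    have hD0 : 0 ≤ D := Finset.sum_nonneg fun _ _ => Finset.sum_nonneg fun _ _ =>
      Finset.sum_nonneg fun _ _ => phi_nonneg (hf _) (hf _)
    have hM : (0 : ℝ) < (m : ℝ) + 1 := by positivity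
    -- chain rule for the entropy when conditioning on `σ i`
    have step : ∀ i ∈ S, ∑ σ ∈ permsOn S, f σ * Real.log (f σ) -
        F * Real.log (F / ((m + 1).factorial : ℝ)) ≤
        (1 / (2 * m)) * ∑ σ ∈ permsOn S, ∑ x ∈ S.erase i, ∑ z ∈ S.erase i,
          phi (f σ) (f (σ * Equiv.swap x z)) +
        (1 / (2 * (m + 1))) * ∑ σ ∈ permsOn S, ∑ w ∈ S,
          phi (f σ) (f (σ * Equiv.swap i w)) := by
      intro i hi
      have hcard : #(S.erase i) = m := by
        rw [Finset.card_erase_of_mem hi, hm]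
        rfl
      set g : α → ℝ := fun y => ∑ ρ ∈ (permsOn S).filter (fun ρ => ρ i = y), f ρ with hg
      have hgpos : ∀ y ∈ S, 0 < g y := by
        intro y hy
        refine Finset.sum_pos (fun _ _ => hf _) ⟨Equiv.swap i y, ?_⟩
        rw [Finset.mem_filter]
        exact ⟨swap_mem_permsOn hi hy, by simp⟩
      have hFg : F = ∑ y ∈ S, g y := sum_fiber hi f
      have h1 : ∀ y ∈ S, ∑ ρ ∈ (permsOn S).filter (fun ρ => ρ i = y), f ρ * Real.log (f ρ) -
          g y * Real.log (g y / (m.factorial : ℝ)) ≤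
          (1 / (2 * m)) * ∑ ρ ∈ (permsOn S).filter (fun ρ => ρ i = y),
            ∑ x ∈ S.erase i, ∑ z ∈ S.erase i, phi (f ρ) (f (ρ * Equiv.swap x z)) := by
        intro y hy
        have h := ih (S.erase i) (fun τ => f (Equiv.swap i y * τ)) (fun _ => hf _) hcard
        simp only [hg]
        rw [sum_fiber_erase hi hy, sum_fiber_erase hi hy, sum_fiber_erase hi hy]
        simpa only [mul_assoc] using h
      have h2 := Finset.sum_le_sum h1
      rw [Finset.sum_sub_distrib, ← Finset.mul_sum, ← sum_fiber hi, ← sum_fiber hi] at h2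
      have h3 := ent_le_phi S g hSne hgpos
      rw [← hFg, hm] at h3
      have h4 := marginal_le hi f hf
      have h5 : ∑ y ∈ S, g y * Real.log (g y / (m.factorial : ℝ)) =
          ∑ y ∈ S, g y * Real.log (g y) - F * Real.log (m.factorial : ℝ) := by
        rw [hFg, Finset.sum_mul, ← Finset.sum_sub_distrib]
        refine Finset.sum_congr rfl fun y hy => ?_
        rw [Real.log_div (hgpos y hy).ne' (by positivity)]
        ring
      have hFpos : 0 < F := hFg ▸ Finset.sum_pos hgpos hSne
      have h6 : F * Real.log (F / ((m + 1).factorial : ℝ)) =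
          F * Real.log (F / ((m + 1 : ℕ) : ℝ)) - F * Real.log (m.factorial : ℝ) := by
        rw [Nat.factorial_succ, Nat.cast_mul, ← div_div,
          Real.log_div (by positivity) (by positivity)]
        ring
      have h7 := mul_le_mul_of_nonneg_left h4
        (show (0 : ℝ) ≤ 1 / (2 * ((m + 1 : ℕ) : ℝ)) by positivity)
      push_cast at h3 h6 h7 ⊢
      linarith
    -- averaging the previous bound over `i`
    have hsum := Finset.sum_le_sum step
    rw [Finset.sum_const, nsmul_eq_mul, hm, Finset.sum_add_distrib, ← Finset.mul_sum,
      ← Finset.mul_sum, Finset.sum_comm (s := S) (t := permsOn S),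
      Finset.sum_comm (s := S) (t := permsOn S), ← hD] at hsum
    have hpairs : ∑ σ ∈ permsOn S, ∑ i ∈ S, ∑ x ∈ S.erase i, ∑ z ∈ S.erase i,
        phi (f σ) (f (σ * Equiv.swap x z)) = ((m : ℝ) - 1) * D := by
      rw [hD, Finset.mul_sum]
      refine Finset.sum_congr rfl fun σ _ => ?_
      rw [sum_erase_pairs S _ (fun x => by
        rw [Equiv.swap_self, ← Equiv.Perm.one_def, mul_one, phi_self]), hm]
      push_cast
      ring
    rw [hpairs] at hsum
    set E := ∑ σ ∈ permsOn S, f σ * Real.log (f σ) - F * Real.log (F / ((m + 1).factorial : ℝ))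
    push_cast at hsum ⊢
    -- `(m - 1) / m + 1 / (m + 1) ≤ 1`
    have hfin : 1 / (2 * (m : ℝ)) * (((m : ℝ) - 1) * D) + 1 / (2 * ((m : ℝ) + 1)) * D ≤
        D / 2 := by
      rcases Nat.eq_zero_or_pos m with h0 | h0
      · subst h0
        simp
        linarith
      · have hm0 : (0 : ℝ) < m := by exact_mod_cast h0
        have : D / 2 - (1 / (2 * (m : ℝ)) * (((m : ℝ) - 1) * D) + 1 / (2 * ((m : ℝ) + 1)) * D)
            = D / (2 * m * (m + 1)) := by
          field_simp
          ring
        have h' : 0 ≤ D / (2 * m * (m + 1)) := by positivity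
        linarith
    have h8 : ((m : ℝ) + 1) * E ≤ D / 2 := hsum.trans hfin
    have h9 : 1 / (2 * ((m : ℝ) + 1)) * D = (D / 2) / (m + 1) := by
      field_simp
    rw [h9, le_div_iff₀ hM]
    linarith

end Perms

/-! ### The configuration map -/

theorem card_perm_comp_eq {α ι : Type*} [Fintype α] [DecidableEq α] [Fintype ι] [DecidableEq ι]
    (f g : α → ι)
    (h : ∀ i, #(univ.filter fun a => f a = i) = #(univ.filter fun a => g a = i)) :
    #(univ.filter fun σ : Equiv.Perm α => ∀ a, f (σ a) = g a) =
      ∏ i, (#(univ.filter fun a => f a = i)).factorial := by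
  have hc : ∀ i, Fintype.card {a // g a = i} = Fintype.card {a // f a = i} := by
    intro i
    rw [Fintype.card_subtype, Fintype.card_subtype, h]
  let σ₀ : Equiv.Perm α := Equiv.ofFiberEquiv (f := g) (g := f)
    fun i => Fintype.equivOfCardEq (hc i)
  have hσ₀ : ∀ a, f (σ₀ a) = g a := fun a => Equiv.ofFiberEquiv_map _ a
  have h1 := DomMulAct.stabilizer_card f
  rw [Fintype.card_subtype] at h1
  simp only [Fintype.card_subtype] at h1
  rw [← h1]
  refine Finset.card_nbij' (fun σ => σ * σ₀⁻¹) (fun σ => σ * σ₀) ?_ ?_ ?_ ?_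
  · intro σ hσ
    simp only [Finset.coe_filter, Finset.mem_univ, true_and, Set.mem_ofPred_eq] at *
    funext a
    have h2 := hσ (σ₀⁻¹ a)
    rw [← hσ₀] at h2
    simpa using h2
  · intro σ hσ
    simp only [Finset.coe_filter, Finset.mem_univ, true_and, Set.mem_ofPred_eq] at *
    intro a
    rw [← hσ₀ a]
    exact congrFun hσ (σ₀ a)
  · intro σ _
    simp
  · intro σ _
    simp

/-- The table of a map `h` on half-edges: the number of half-edges of the left vertex `i`
that `h` sends to `j`. -/
def tableOf {n d : ℕ} (h : Fin n × Fin d → Fin n) : MG n :=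
  fun i j => #(univ.filter fun x : Fin n × Fin d => x.1 = i ∧ h x = j)

theorem tableOf_row {n d : ℕ} (h : Fin n × Fin d → Fin n) (i : Fin n) :
    ∑ j, tableOf h i j = d := by
  unfold tableOf
  have h1 := Finset.card_eq_sum_card_fiberwise (f := h)
    (s := univ.filter fun x : Fin n × Fin d => x.1 = i) (t := univ) (by simp)
  simp only [Finset.filter_filter] at h1
  rw [← h1]
  have h2 : (univ.filter fun x : Fin n × Fin d => x.1 = i) = {i} ×ˢ univ := by
    ext x
    simp only [Finset.mem_filter, Finset.mem_product, Finset.mem_singleton, Finset.mem_univ,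
      true_and, and_true]
  rw [h2, Finset.card_product]
  simp

theorem tableOf_col {n d : ℕ} (h : Fin n × Fin d → Fin n) (j : Fin n) :
    ∑ i, tableOf h i j = #(univ.filter fun x => h x = j) := by
  unfold tableOf
  have h1 := Finset.card_eq_sum_card_fiberwise (f := fun x : Fin n × Fin d => x.1)
    (s := univ.filter fun x => h x = j) (t := univ) (by simp)
  simp only [Finset.filter_filter] at h1
  rw [h1]
  simp only [and_comm]

theorem card_fst_fiber (n d : ℕ) (j : Fin n) :
    #(univ.filter fun x : Fin n × Fin d => x.1 = j) = d := by
  have h2 : (univ.filter fun x : Fin n × Fin d => x.1 = j) = {j} ×ˢ univ := by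
    ext x
    simp only [Finset.mem_filter, Finset.mem_product, Finset.mem_singleton, Finset.mem_univ,
      true_and, and_true]
  rw [h2, Finset.card_product]
  simp

/-- The multigraph of a perfect matching `σ` between left and right half-edges. -/
def configMap {n d : ℕ} (σ : Equiv.Perm (Fin n × Fin d)) : OmegaBC n d :=
  ⟨tableOf fun x => (σ x).1, fun i => tableOf_row _ i, fun j => by
    rw [tableOf_col]
    have h : #(univ.filter fun x : Fin n × Fin d => (σ x).1 = j) =
        #(univ.filter fun x : Fin n × Fin d => x.1 = j) :=
      Finset.card_nbij' (fun x => σ x) (fun x => σ⁻¹ x) (by intro x; simp) (by intro x; simp)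
        (by intro x; simp) (by intro x; simp)
    rw [h, card_fst_fiber]⟩

theorem exists_tableOf {n d : ℕ} (G : OmegaBC n d) :
    ∃ h : Fin n × Fin d → Fin n, tableOf h = G.1 := by
  have hc : ∀ i, Fintype.card (Σ j, Fin (G.1 i j)) = d := by
    intro i
    simp [G.2.1 i]
  let e : ∀ i, (Σ j, Fin (G.1 i j)) ≃ Fin d := fun i => Fintype.equivFinOfCardEq (hc i)
  refine ⟨fun x => ((e x.1).symm x.2).1, ?_⟩
  funext i j
  unfold tableOf
  rw [← Fintype.card_fin (G.1 i j), ← Finset.card_univ]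
  symm
  refine Finset.card_bij (fun k _ => (i, e i ⟨j, k⟩)) ?_ ?_ ?_
  · intro k _
    simp
  · intro k _ k' _ hk
    simpa using hk
  · rintro ⟨i', k⟩ hx
    simp only [Finset.mem_filter, Finset.mem_univ, true_and] at hx
    obtain ⟨rfl, rfl⟩ := hx
    exact ⟨((e i').symm k).2, Finset.mem_univ _, by simp⟩

theorem card_pair_fiber {n d : ℕ} (h : Fin n × Fin d → Fin n) (p : Fin n × Fin n) :
    #(univ.filter fun x : Fin n × Fin d => (x.1, h x) = p) = tableOf h p.1 p.2 := by
  unfold tableOf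
  congr 1
  ext x
  simp [Prod.ext_iff]

/-- Multinomial count of the maps with a given table: the permutations preserving every left
vertex act transitively on them, with stabilizers of cardinality `∏ (G i j)!`. -/
theorem card_tableOf_eq {n d : ℕ} (G : OmegaBC n d) :
    #(univ.filter fun h : Fin n × Fin d → Fin n => tableOf h = G.1) *
      ∏ i, ∏ j, (G.1 i j).factorial = d.factorial ^ n := by
  obtain ⟨h₀, hh₀⟩ := exists_tableOf G
  have h1 : #(univ.filter fun τ : Equiv.Perm (Fin n × Fin d) => ∀ a, (τ a).1 = a.1) =
      d.factorial ^ n := by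
    rw [card_perm_comp_eq (fun a : Fin n × Fin d => a.1) (fun a => a.1) (fun _ => rfl)]
    simp only [card_fst_fiber, Finset.prod_const, Finset.card_univ, Fintype.card_fin]
  rw [← h1, Finset.card_eq_sum_card_fiberwise
    (f := fun (τ : Equiv.Perm (Fin n × Fin d)) a => h₀ (τ a))
    (t := univ.filter fun h : Fin n × Fin d → Fin n => tableOf h = G.1)]
  · rw [Finset.sum_congr rfl (g := fun _ => ∏ i, ∏ j, (G.1 i j).factorial), Finset.sum_const,
      smul_eq_mul]
    intro h hh
    simp only [Finset.mem_filter, Finset.mem_univ, true_and] at hh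
    have h2 := card_perm_comp_eq (fun a => (a.1, h₀ a)) (fun a => (a.1, h a)) (by
      intro p
      rw [card_pair_fiber, card_pair_fiber, hh₀, hh])
    simp only [card_pair_fiber, hh₀, Fintype.prod_prod_type] at h2
    rw [← h2, Finset.filter_filter]
    congr 1
    ext τ
    simp [Prod.ext_iff, funext_iff, forall_and]
  · intro τ hτ
    simp only [Finset.coe_filter, Finset.mem_univ, true_and, Set.mem_ofPred_eq] at *
    rw [← hh₀]
    funext i j
    unfold tableOf
    refine Finset.card_nbij' (fun x => τ x) (fun x => τ⁻¹ x) ?_ ?_ ?_ ?_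
    · intro x
      simp [hτ]
    · intro x
      have h3 := hτ (τ⁻¹ x)
      rw [← Equiv.Perm.mul_apply, mul_inv_cancel, Equiv.Perm.one_apply] at h3
      simp only [Finset.mem_univ, true_and, Finset.coe_filter,
        Set.mem_ofPred_eq]
      rintro ⟨h4, h5⟩
      exact ⟨h3.symm.trans h4, by simpa using h5⟩
    · intro x
      simp
    · intro x
      simp

theorem card_configMap_eq {n d : ℕ} (G : OmegaBC n d) :
    #(univ.filter fun σ : Equiv.Perm (Fin n × Fin d) => configMap σ = G) *
      ∏ i, ∏ j, (G.1 i j).factorial = d.factorial ^ (2 * n) := by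
  have h1 : #(univ.filter fun σ : Equiv.Perm (Fin n × Fin d) => configMap σ = G) =
      #(univ.filter fun h : Fin n × Fin d → Fin n => tableOf h = G.1) * d.factorial ^ n := by
    rw [Finset.card_eq_sum_card_fiberwise
      (f := fun (σ : Equiv.Perm (Fin n × Fin d)) a => (σ a).1)
      (t := univ.filter fun h : Fin n × Fin d → Fin n => tableOf h = G.1)]
    · rw [Finset.sum_congr rfl (g := fun _ => d.factorial ^ n), Finset.sum_const, smul_eq_mul]
      intro h hh
      simp only [Finset.mem_filter, Finset.mem_univ, true_and] at hh
      have h2 := card_perm_comp_eq (fun a : Fin n × Fin d => a.1) h (by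
        intro j
        rw [card_fst_fiber, ← tableOf_col, hh, G.2.2])
      simp only [card_fst_fiber, Finset.prod_const, Finset.card_univ, Fintype.card_fin] at h2
      rw [← h2, Finset.filter_filter]
      congr 1
      ext σ
      simp only [Finset.mem_filter, Finset.mem_univ, true_and]
      constructor
      · rintro ⟨_, h3⟩ a
        exact congrFun h3 a
      · intro h3
        have h4 : (fun a => (σ a).1) = h := funext h3
        exact ⟨Subtype.ext ((congrArg tableOf h4).trans hh), h4⟩
    · intro σ hσ
      simp only [Finset.coe_filter, Finset.mem_univ, true_and, Set.mem_ofPred_eq] at *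
      rw [← hσ]
      rfl
  rw [h1, mul_right_comm, card_tableOf_eq, two_mul, pow_add]

/-- `piBC` is the image of the uniform measure on matchings under `configMap`. -/
theorem sum_configMap {n d : ℕ} (h : OmegaBC n d → ℝ) :
    ∑ σ : Equiv.Perm (Fin n × Fin d), h (configMap σ) =
      ((n * d).factorial : ℝ) * ∑ G, piBC n d G * h G := by
  rw [← Finset.sum_fiberwise_of_maps_to (s := univ) (t := univ) (g := configMap) (by simp),
    Finset.mul_sum]
  refine Finset.sum_congr rfl fun G _ => ?_
  rw [Finset.sum_congr rfl (g := fun _ => h G), Finset.sum_const, nsmul_eq_mul, ← mul_assoc]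
  · congr 1
    have h1 := card_configMap_eq G
    have h2 : (∏ i, ∏ j, ((G.1 i j).factorial : ℝ)) ≠ 0 :=
      Finset.prod_ne_zero_iff.2 fun i _ => Finset.prod_ne_zero_iff.2 fun j _ => by positivity
    have h3 := congrArg (Nat.cast (R := ℝ)) h1
    push_cast at h3
    unfold piBC
    rw [← h3]
    field_simp
  · intro σ hσ
    rw [(Finset.mem_filter.1 hσ).2]

/-! ### Transpositions of half-edges and switchings -/

theorem sum_halfEdges {n d : ℕ} (h : Fin n × Fin d → Fin n) (g : Fin n → Fin n → ℝ) :
    ∑ x, g x.1 (h x) = ∑ i, ∑ j, (tableOf h i j : ℝ) * g i j := by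
  rw [← Fintype.sum_prod_type' (f := fun i j => (tableOf h i j : ℝ) * g i j),
    ← Finset.sum_fiberwise_of_maps_to (s := univ) (t := univ) (g := fun x => (x.1, h x))
      (by simp)]
  refine Finset.sum_congr rfl fun p _ => ?_
  rw [Finset.sum_congr rfl (g := fun _ => g p.1 p.2), Finset.sum_const, nsmul_eq_mul,
    card_pair_fiber]
  intro x hx
  rw [← (Finset.mem_filter.1 hx).2]

theorem configMap_swap_apply {n d : ℕ} (σ : Equiv.Perm (Fin n × Fin d)) {x z : Fin n × Fin d}
    (hxz : x ≠ z) (a b : Fin n) :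
    (configMap (σ * Equiv.swap x z)).1 a b + (if x.1 = a ∧ (σ x).1 = b then 1 else 0) +
        (if z.1 = a ∧ (σ z).1 = b then 1 else 0) =
      (configMap σ).1 a b + (if x.1 = a ∧ (σ z).1 = b then 1 else 0) +
        (if z.1 = a ∧ (σ x).1 = b then 1 else 0) := by
  have hz : z ∈ univ.erase x := by simp [hxz.symm]
  simp only [configMap, tableOf, Finset.card_filter]
  rw [← Finset.add_sum_erase _ _ (Finset.mem_univ x), ← Finset.add_sum_erase _ _ hz,
    ← Finset.add_sum_erase univ (fun w => if w.1 = a ∧ (σ w).1 = b then 1 else 0)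
      (Finset.mem_univ x),
    ← Finset.add_sum_erase _ (fun w => if w.1 = a ∧ (σ w).1 = b then 1 else 0) hz]
  have h : ∑ w ∈ (univ.erase x).erase z,
      (if w.1 = a ∧ ((σ * Equiv.swap x z) w).1 = b then 1 else 0) =
      ∑ w ∈ (univ.erase x).erase z, (if w.1 = a ∧ (σ w).1 = b then 1 else 0) := by
    refine Finset.sum_congr rfl fun w hw => ?_
    simp only [Finset.mem_erase] at hw
    rw [Equiv.Perm.mul_apply, Equiv.swap_apply_of_ne_of_ne hw.2.1 hw.1]
  rw [h]
  simp only [Equiv.Perm.mul_apply, Equiv.swap_apply_left, Equiv.swap_apply_right]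
  omega

theorem configMap_swap_of_eq {n d : ℕ} (σ : Equiv.Perm (Fin n × Fin d)) {x z : Fin n × Fin d}
    (h : x.1 = z.1 ∨ (σ x).1 = (σ z).1) : configMap (σ * Equiv.swap x z) = configMap σ := by
  by_cases hxz : x = z
  · subst hxz
    rw [Equiv.swap_self, ← Equiv.Perm.one_def, mul_one]
  refine Subtype.ext (funext fun a => funext fun b => ?_)
  have h1 := configMap_swap_apply σ hxz a b
  rcases h with h | h
  · rw [h] at h1
    omega
  · rw [h] at h1
    omega

theorem one_le_configMap {n d : ℕ} (σ : Equiv.Perm (Fin n × Fin d)) (x : Fin n × Fin d) :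
    1 ≤ (configMap σ).1 x.1 (σ x).1 := by
  change 1 ≤ #_
  rw [Nat.one_le_iff_ne_zero, Finset.card_ne_zero]
  exact ⟨x, by simp⟩

theorem configMap_swap_of_ne {n d : ℕ} (σ : Equiv.Perm (Fin n × Fin d)) {x z : Fin n × Fin d}
    (h : x.1 ≠ z.1) (h' : (σ x).1 ≠ (σ z).1) :
    (configMap (σ * Equiv.swap x z)).1 =
      switchResMG (configMap σ).1 x.1 z.1 (σ x).1 (σ z).1 := by
  funext a b
  have h1 := configMap_swap_apply σ (fun e => h (congrArg Prod.fst e) : x ≠ z) a b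
  unfold switchResMG
  grind

/-- For a matching with multigraph `G`, the transpositions of half-edges induce the switchings of
`G` with multiplicity `mult(i,j) * mult(i',j')`. -/
theorem sum_transpositions {n d : ℕ} (hN : 1 < n * d) (σ : Equiv.Perm (Fin n × Fin d))
    (f : OmegaBC n d → ℝ) :
    ∑ x, ∑ z, phi (f (configMap σ)) (f (configMap (σ * Equiv.swap x z))) =
      ((n * d : ℝ) * ((n * d : ℝ) - 1)) *
        ∑ G', QcOff n d (configMap σ) G' * phi (f (configMap σ)) (f G') := by
  set G := configMap σ with hG
  let P : Fin n → Fin n → Fin n → Fin n → OmegaBC n d → Prop := fun i i' j j' G' =>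
    i ≠ i' ∧ j ≠ j' ∧ 1 ≤ G.1 i j ∧ 1 ≤ G.1 i' j' ∧ G'.1 = switchResMG G.1 i i' j j'
  let Φ : Fin n → Fin n → Fin n → Fin n → ℝ := fun i i' j j' =>
    ∑ G', if P i i' j j' G' then phi (f G) (f G') else 0
  have h1 : ∀ x z, phi (f G) (f (configMap (σ * Equiv.swap x z))) =
      Φ x.1 z.1 (σ x).1 (σ z).1 := by
    intro x z
    by_cases h : x.1 = z.1 ∨ (σ x).1 = (σ z).1
    · rw [configMap_swap_of_eq σ h, ← hG, phi_self]
      symm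
      refine Finset.sum_eq_zero fun G' _ => if_neg ?_
      rintro ⟨ha, hb, -⟩
      tauto
    · push Not at h
      rw [eq_comm]
      refine (Finset.sum_eq_single (configMap (σ * Equiv.swap x z)) ?_ (by simp)).trans
        (if_pos ?_)
      · intro G' _ hne
        refine if_neg fun hP => hne (Subtype.ext ?_)
        rw [configMap_swap_of_ne σ h.1 h.2]
        exact hP.2.2.2.2
      · exact ⟨h.1, h.2, one_le_configMap σ x, one_le_configMap σ z,
          configMap_swap_of_ne σ h.1 h.2⟩
  have h2 : ∑ x, ∑ z, phi (f G) (f (configMap (σ * Equiv.swap x z))) =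
      ∑ i, ∑ i', ∑ j, ∑ j', (G.1 i j : ℝ) * (G.1 i' j' : ℝ) * Φ i i' j j' := by
    simp only [h1]
    have h3 : ∀ x : Fin n × Fin d, ∑ z : Fin n × Fin d, Φ x.1 z.1 (σ x).1 (σ z).1 =
        ∑ i', ∑ j', (G.1 i' j' : ℝ) * Φ x.1 i' (σ x).1 j' := fun x =>
      sum_halfEdges (fun z => (σ z).1) fun i' j' => Φ x.1 i' (σ x).1 j'
    simp only [h3]
    refine (sum_halfEdges (fun z => (σ z).1)
      fun i j => ∑ i', ∑ j', (G.1 i' j' : ℝ) * Φ i i' j j').trans ?_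
    refine Finset.sum_congr rfl fun i _ => ?_
    rw [Finset.sum_comm (s := univ) (t := univ) (f := fun i' j => ∑ j',
      (G.1 i j : ℝ) * (G.1 i' j' : ℝ) * Φ i i' j j')]
    refine Finset.sum_congr rfl fun j _ => ?_
    simp only [Finset.mul_sum, mul_assoc]
    rfl
  rw [h2]
  have hN' : (1 : ℝ) < (n * d : ℝ) := by exact_mod_cast hN
  have hne : ((n * d : ℝ) * ((n * d : ℝ) - 1)) ≠ 0 := by
    have : (0 : ℝ) < (n * d : ℝ) - 1 := by linarith
    positivity
  have h4 : ∀ G', ((n * d : ℝ) * ((n * d : ℝ) - 1)) * (QcOff n d G G' * phi (f G) (f G')) =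
      ∑ i, ∑ i', ∑ j, ∑ j', (G.1 i j : ℝ) * (G.1 i' j' : ℝ) *
        (if P i i' j j' G' then phi (f G) (f G') else 0) := by
    intro G'
    unfold QcOff
    simp only [Finset.mul_sum, Finset.sum_mul]
    refine Finset.sum_congr rfl fun i _ => Finset.sum_congr rfl fun i' _ =>
      Finset.sum_congr rfl fun j _ => Finset.sum_congr rfl fun j' _ => ?_
    by_cases hP : P i i' j j' G'
    · rw [if_pos hP, if_pos hP]
      generalize (n * d : ℝ) * ((n * d : ℝ) - 1) = c at hne ⊢
      field_simp
    · rw [if_neg hP, if_neg hP]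
      ring
  rw [Finset.mul_sum, Finset.sum_congr rfl fun G' _ => h4 G',
    Finset.sum_comm (s := (univ : Finset (OmegaBC n d)))]
  refine Finset.sum_congr rfl fun i _ => ?_
  rw [Finset.sum_comm (s := (univ : Finset (OmegaBC n d)))]
  refine Finset.sum_congr rfl fun i' _ => ?_
  rw [Finset.sum_comm (s := (univ : Finset (OmegaBC n d)))]
  refine Finset.sum_congr rfl fun j _ => ?_
  rw [Finset.sum_comm (s := (univ : Finset (OmegaBC n d)))]
  refine Finset.sum_congr rfl fun j' _ => ?_
  rw [← Finset.mul_sum]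

theorem dirForm_eq {n d : ℕ} (f : OmegaBC n d → ℝ) :
    dirForm (piBC n d) (Qc n d) f =
      (1 / 2) * ∑ G, piBC n d G * ∑ G', QcOff n d G G' * phi (f G) (f G') := by
  unfold dirForm
  congr 1
  refine Finset.sum_congr rfl fun G _ => ?_
  rw [Finset.mul_sum]
  refine Finset.sum_congr rfl fun G' _ => ?_
  by_cases h : G = G'
  · subst h
    simp [phi_self]
  · simp only [Qc, if_neg h, phi]
    ring

/-- Proposition 4.3: the switch chain on the configuration model satisfies the
Modified log-Sobolev Inequality with constant `c · n · d`. -/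
theorem config_model_mlsi :
    ∃ c : ℝ, 0 < c ∧
      ∀ n d : ℕ, 2 ≤ d → 2 * d ≤ n →
        ∀ f : OmegaBC n d → ℝ, (∀ G, 0 < f G) →
          entPi (piBC n d) f ≤ c * n * d * dirForm (piBC n d) (Qc n d) f := by
  refine ⟨1, one_pos, fun n d hd hdn f hf => ?_⟩
  have hN : 1 < n * d := by nlinarith
  have hN' : (1 : ℝ) < (n * d : ℝ) := by exact_mod_cast hN
  have hcard : #(univ : Finset (Fin n × Fin d)) = n * d := by simp
  have hP : permsOn (univ : Finset (Fin n × Fin d)) = univ := by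
    ext σ
    simp [mem_permsOn]
  have h := perm_mlsi (univ : Finset (Fin n × Fin d)) (fun σ => f (configMap σ)) fun _ => hf _
  simp only [hP, hcard, sum_transpositions hN] at h
  rw [sum_configMap (fun G => f G * Real.log (f G)), sum_configMap f,
    sum_configMap (fun G => ((n * d : ℝ) * ((n * d : ℝ) - 1)) *
      ∑ G', QcOff n d G G' * phi (f G) (f G'))] at h
  have hfac : (0 : ℝ) < ((n * d).factorial : ℝ) := by positivity
  rw [mul_div_cancel_left₀ _ hfac.ne'] at h
  have hpi : ∀ G, 0 ≤ piBC n d G := fun G => by unfold piBC; positivity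
  have hE : entPi (piBC n d) f = ∑ G, piBC n d G * (f G * Real.log (f G)) -
      (∑ G, piBC n d G * f G) * Real.log (∑ G, piBC n d G * f G) := by
    unfold entPi
    rw [Finset.sum_mul, ← Finset.sum_sub_distrib]
    exact Finset.sum_congr rfl fun G _ => by ring
  have hD : ∑ G, piBC n d G * (((n * d : ℝ) * ((n * d : ℝ) - 1)) *
      ∑ G', QcOff n d G G' * phi (f G) (f G')) =
      ((n * d : ℝ) * ((n * d : ℝ) - 1)) * (2 * dirForm (piBC n d) (Qc n d) f) := by
    rw [dirForm_eq, ← mul_assoc 2, mul_one_div_cancel two_ne_zero, one_mul, Finset.mul_sum]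
    exact Finset.sum_congr rfl fun G _ => by ring
  have hQ : ∀ G G', 0 ≤ QcOff n d G G' := by
    intro G G'
    have : (0 : ℝ) < (n * d : ℝ) - 1 := by linarith
    unfold QcOff
    refine mul_nonneg (by norm_num) (Finset.sum_nonneg fun i _ => Finset.sum_nonneg fun i' _ =>
      Finset.sum_nonneg fun j _ => Finset.sum_nonneg fun j' _ => ?_)
    split_ifs <;> positivity
  have hD0 : 0 ≤ dirForm (piBC n d) (Qc n d) f := by
    rw [dirForm_eq]
    exact mul_nonneg (by norm_num) (Finset.sum_nonneg fun G _ => mul_nonneg (hpi G)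
      (Finset.sum_nonneg fun G' _ => mul_nonneg (hQ G G') (phi_nonneg (hf _) (hf _))))
  set D := dirForm (piBC n d) (Qc n d) f
  rw [hD] at h
  have h' : ((n * d).factorial : ℝ) * entPi (piBC n d) f ≤
      ((n * d).factorial : ℝ) * (((n * d : ℝ) - 1) * D) := by
    rw [hE]
    have e : 1 / (2 * ((n * d : ℕ) : ℝ)) * (((n * d).factorial : ℝ) *
        (((n * d : ℝ) * ((n * d : ℝ) - 1)) * (2 * D))) =
        ((n * d).factorial : ℝ) * (((n * d : ℝ) - 1) * D) := by
      have : (n * d : ℝ) ≠ 0 := by linarith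
      push_cast
      generalize (n * d : ℝ) = c at this ⊢
      field_simp
    rw [e] at h
    linarith
  have h'' := le_of_mul_le_mul_left h' hfac
  linarith
end
end

section
/- There is a universal constant C' > 0 with the following property. Let (Ω, π) be a finite probability space with π fully supported, let δ ∈ (0, 1/2], and let f : Ω → (0,∞) satisfy E_π f = 1 and f(ω) ≥ δ for all ω ∈ Ω. Then ∑_{ω∈Ω} π(ω)·(f(ω) − 1)·log f(ω) ≤ C'·|log δ|·Ent_π(f). -/
/-!
Write `φ(x) = 1 - x + x log x ≥ 0`. Since `E_π f = 1`, the entropy is `∑ π φ(f)`, so it suffices to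
prove the pointwise bound `(x - 1) log x ≤ 4 |log δ| φ(x)` for `x ≥ δ`.

* For `x ≥ 1`, `(x - 1) log x ≤ 2 φ(x)`, which is equivalent to `log x ≥ 2 (x - 1) / (x + 1)`.
* For `x ≤ 1`, put `t = -log x ≥ 0`. Then `(x - 1) log x ≤ (2 + t) φ(x)`, which after multiplication
  by `exp t` becomes `1 + t + t ^ 2 / 2 ≤ exp t`; moreover `t ≤ |log δ|`.

As `|log δ| ≥ log 2 ≥ 2 / 3`, both `2` and `2 + |log δ|` are at most `4 |log δ|`.
-/

open Finset

noncomputable section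

/-- `π` is a fully supported probability vector. -/
def IsProbVec {Ω : Type*} [Fintype Ω] (π : Ω → ℝ) : Prop :=
  (∀ ω, 0 < π ω) ∧ ∑ ω, π ω = 1

theorem entropyDensity_nonneg {x : ℝ} (hx : 0 < x) : 0 ≤ 1 - x + x * Real.log x := by
  have h := mul_le_mul_of_nonneg_left (Real.one_sub_inv_le_log_of_pos hx) hx.le
  rw [mul_sub, mul_inv_cancel₀ hx.ne'] at h
  linarith

theorem sub_one_mul_log_le_of_one_le {x : ℝ} (hx : 1 ≤ x) :
    (x - 1) * Real.log x ≤ 2 * (1 - x + x * Real.log x) := by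
  have h := Real.le_log_one_add_of_nonneg (sub_nonneg.2 hx)
  rw [add_sub_cancel, div_le_iff₀ (by linarith)] at h
  linarith

theorem sub_one_mul_log_le_of_le_one {x : ℝ} (hx0 : 0 < x) (hx : x ≤ 1) :
    (x - 1) * Real.log x ≤ (2 + -Real.log x) * (1 - x + x * Real.log x) := by
  have hq := Real.quadratic_le_exp_of_nonneg (neg_nonneg.2 (Real.log_nonpos hx0.le hx))
  rw [Real.exp_neg, Real.exp_log hx0] at hq
  have h := mul_le_mul_of_nonneg_left hq hx0.le
  rw [mul_inv_cancel₀ hx0.ne'] at h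
  linarith

/-- Lemma: for `f ≥ δ` with mean one,
`∑ π(ω) (f(ω) - 1) log f(ω) ≤ C' |log δ| Ent_π(f)`. -/
theorem sum_sub_one_mul_log_le :
    ∃ C' : ℝ, 0 < C' ∧
      ∀ (Ω : Type) [Fintype Ω] [Nonempty Ω] (π : Ω → ℝ), IsProbVec π →
        ∀ δ : ℝ, 0 < δ → δ ≤ 1 / 2 →
          ∀ f : Ω → ℝ, (∀ ω, 0 < f ω) → (∀ ω, δ ≤ f ω) → (∑ ω, π ω * f ω) = 1 →
            ∑ ω, π ω * (f ω - 1) * Real.log (f ω) ≤ C' * |Real.log δ| * entPi π f := by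
  refine ⟨4, by norm_num, ?_⟩
  intro Ω _ _ π hπ δ hδ0 hδ f hf0 hf hmean
  have hL : |Real.log δ| = -Real.log δ :=
    abs_of_nonpos (Real.log_nonpos hδ0.le (by linarith))
  have hL2 : 2 / 3 ≤ -Real.log δ := by
    have h1 : Real.log δ ≤ Real.log (1 / 2) := Real.log_le_log hδ0 hδ
    rw [one_div, Real.log_inv] at h1
    linarith [Real.log_two_gt_d9]
  have hent : entPi π f = ∑ ω, π ω * (1 - f ω + f ω * Real.log (f ω)) := by
    have h : ∑ ω, π ω * (1 - f ω + f ω * Real.log (f ω))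
        = ∑ ω, π ω - ∑ ω, π ω * f ω + ∑ ω, π ω * f ω * Real.log (f ω) := by
      rw [← Finset.sum_sub_distrib, ← Finset.sum_add_distrib]
      exact Finset.sum_congr rfl fun ω _ => by ring
    rw [h, hπ.2, hmean, entPi, hmean]
    simp
  rw [hent, hL, Finset.mul_sum]
  refine Finset.sum_le_sum fun ω _ => ?_
  have hlog : Real.log δ ≤ Real.log (f ω) := Real.log_le_log hδ0 (hf ω)
  have hφ := entropyDensity_nonneg (hf0 ω)
  have hpt : (f ω - 1) * Real.log (f ω)
      ≤ 4 * -Real.log δ * (1 - f ω + f ω * Real.log (f ω)) := by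
    rcases le_total 1 (f ω) with h1 | h1
    · refine (sub_one_mul_log_le_of_one_le h1).trans ?_
      exact mul_le_mul_of_nonneg_right (by linarith) hφ
    · refine (sub_one_mul_log_le_of_le_one (hf0 ω) h1).trans ?_
      exact mul_le_mul_of_nonneg_right (by linarith) hφ
  calc π ω * (f ω - 1) * Real.log (f ω) = π ω * ((f ω - 1) * Real.log (f ω)) := by ring
    _ ≤ π ω * (4 * -Real.log δ * (1 - f ω + f ω * Real.log (f ω))) :=
        mul_le_mul_of_nonneg_left hpt (hπ.1 ω).le
    _ = _ := by ring
end
end
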